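/- Stationary super-solution family: for γ ≥ 0 define S_γ(x) := n̂₀(x) + γ m(x), where n̂₀(x) = x²/(eˣ − 1) and m(x) = x² eˣ/(eˣ − 1)². Then for every x > 0 the flux of S_γ satisfies J(x, S_γ) = γ² m(x)² ≥ 0, and m is nonincreasing on (0,∞), so ∂ₓ J(x, S_γ) = 2γ² m(x) m′(x) ≤ 0 for all x > 0. Hence S_γ is a stationary super-solution of the Kompaneets equation. -/

import Mathlib

/-!
With `E = eˣ`, the profile `m` satisfies the linearisation of `J(x, ·) = 0` at the Planck profile
`n̂₀ = x² / (E - 1)`, i.e. `x² m' + (x² - 2x) m + 2 n̂₀ m = 0`, while `J(x, n̂₀) = 0`. Since `J` is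
quadratic in `u` with quadratic part `u²`, only `γ² m²` survives in `J(x, n̂₀ + γ m)`.

Monotonicity of `m` comes from `m' = x E ((2 - x) E - (2 + x)) / (E - 1)³` together with
`(2 - x) eˣ ≤ 2 + x` for `x ≥ 0` (`two_sub_mul_exp_le`).
-/

open MeasureTheory Filter Set Real Topology

/-- The Kompaneets photon flux `J(x,u) = x² u'(x) + (x² - 2x) u(x) + u(x)²`. -/
noncomputable def kompFlux (u : ℝ → ℝ) (x : ℝ) : ℝ :=
  x ^ 2 * deriv u x + (x ^ 2 - 2 * x) * u x + u x ^ 2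

/-- The auxiliary profile `m(x) = x² eˣ / (eˣ - 1)²`. -/
noncomputable def mAux (x : ℝ) : ℝ := x ^ 2 * Real.exp x / (Real.exp x - 1) ^ 2

/-- The stationary super-solution family `S_γ = n̂₀ + γ m`. -/
noncomputable def Sgam (γ x : ℝ) : ℝ := x ^ 2 / (Real.exp x - 1) + γ * mAux x

lemma two_sub_mul_exp_le {x : ℝ} (hx : 0 ≤ x) : (2 - x) * exp x ≤ 2 + x := by
  have hd : ∀ y : ℝ, HasDerivAt (fun y : ℝ => 2 + y - (2 - y) * exp y)
      (1 - (1 - y) * exp y) y := by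
    intro y
    have h := ((hasDerivAt_id y).const_add 2).sub
      (((hasDerivAt_id y).const_sub 2).mul (Real.hasDerivAt_exp y))
    refine h.congr_deriv ?_
    simp only [id]
    ring
  have hmono : Monotone (fun y : ℝ => 2 + y - (2 - y) * exp y) := by
    refine monotone_of_deriv_nonneg (fun y => (hd y).differentiableAt) (fun y => ?_)
    rw [(hd y).deriv]
    have h1 : 1 - y ≤ exp (-y) := by linarith [Real.add_one_le_exp (-y)]
    have h2 := mul_le_mul_of_nonneg_right h1 (exp_pos y).le
    rw [← Real.exp_add, neg_add_cancel, Real.exp_zero] at h2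
    linarith
  have h := hmono hx
  simp only [Real.exp_zero] at h
  linarith

lemma exp_sub_one_pos {x : ℝ} (hx : 0 < x) : 0 < exp x - 1 :=
  sub_pos.mpr (Real.one_lt_exp_iff.mpr hx)

lemma hasDerivAt_mAux {x : ℝ} (hx : 0 < x) :
    HasDerivAt mAux (x * exp x * ((2 - x) * exp x - (2 + x)) / (exp x - 1) ^ 3) x := by
  have hE := (exp_sub_one_pos hx).ne'
  have h := ((hasDerivAt_pow 2 x).mul (Real.hasDerivAt_exp x)).div
    (((Real.hasDerivAt_exp x).sub_const 1).pow 2) (pow_ne_zero 2 hE)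
  refine h.congr_deriv ?_
  simp only [Pi.mul_apply, Pi.pow_apply]
  field_simp
  push_cast
  ring

lemma deriv_mAux_nonpos {x : ℝ} (hx : 0 < x) : deriv mAux x ≤ 0 := by
  rw [(hasDerivAt_mAux hx).deriv]
  refine div_nonpos_of_nonpos_of_nonneg ?_ (pow_nonneg (exp_sub_one_pos hx).le 3)
  exact mul_nonpos_of_nonneg_of_nonpos (by positivity)
    (by linarith [two_sub_mul_exp_le hx.le])

lemma mAux_nonneg (x : ℝ) : 0 ≤ mAux x := by
  unfold mAux
  positivity

lemma antitoneOn_mAux : AntitoneOn mAux (Set.Ioi (0 : ℝ)) := by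
  refine antitoneOn_of_deriv_nonpos (convex_Ioi 0)
    (fun x hx => (hasDerivAt_mAux hx).continuousAt.continuousWithinAt) ?_ ?_
  · intro x hx
    rw [interior_Ioi] at hx
    exact (hasDerivAt_mAux hx).differentiableAt.differentiableWithinAt
  · intro x hx
    rw [interior_Ioi] at hx
    exact deriv_mAux_nonpos hx

lemma kompFlux_Sgam (γ : ℝ) {x : ℝ} (hx : 0 < x) :
    kompFlux (Sgam γ) x = γ ^ 2 * mAux x ^ 2 := by
  have hE := (exp_sub_one_pos hx).ne'
  have h : HasDerivAt (Sgam γ) _ x :=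
    ((hasDerivAt_pow 2 x).div ((Real.hasDerivAt_exp x).sub_const 1) hE).add
      ((hasDerivAt_mAux hx).const_mul γ)
  unfold kompFlux
  rw [h.deriv]
  unfold Sgam mAux
  field_simp
  push_cast
  ring

theorem stationary_supersolution_family (γ : ℝ) (hγ : 0 ≤ γ) :
    (∀ x : ℝ, 0 < x →
      kompFlux (Sgam γ) x = γ ^ 2 * mAux x ^ 2 ∧ 0 ≤ kompFlux (Sgam γ) x) ∧
    AntitoneOn mAux (Set.Ioi (0:ℝ)) ∧
    (∀ x : ℝ, 0 < x →
      deriv (fun y => kompFlux (Sgam γ) y) x = 2 * γ ^ 2 * mAux x * deriv mAux x ∧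
      deriv (fun y => kompFlux (Sgam γ) y) x ≤ 0) ∧
    0 ≤ Filter.liminf (fun x => kompFlux (Sgam γ) x) Filter.atTop := by
  have hderiv : ∀ x : ℝ, 0 < x → deriv (fun y => kompFlux (Sgam γ) y) x
      = 2 * γ ^ 2 * mAux x * deriv mAux x := by
    intro x hx
    -- the closed form of the flux holds only on `(0, ∞)`, a neighbourhood of `x`
    have heq : (fun y => kompFlux (Sgam γ) y) =ᶠ[𝓝 x] fun y => γ ^ 2 * mAux y ^ 2 := by
      filter_upwards [Ioi_mem_nhds hx] with y hy using kompFlux_Sgam γ hy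
    rw [heq.deriv_eq]
    have hm := (hasDerivAt_mAux hx).differentiableAt.hasDerivAt
    refine ((hm.pow 2).const_mul (γ ^ 2)).deriv.trans ?_
    push_cast
    ring
  have hnonneg : ∀ x : ℝ, 0 < x → 0 ≤ kompFlux (Sgam γ) x := by
    intro x hx
    rw [kompFlux_Sgam γ hx]
    positivity
  refine ⟨fun x hx => ⟨kompFlux_Sgam γ hx, hnonneg x hx⟩, antitoneOn_mAux,
    fun x hx => ⟨hderiv x hx, ?_⟩, ?_⟩
  · rw [hderiv x hx]
    exact mul_nonpos_of_nonneg_of_nonpos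
      (mul_nonneg (by positivity) (mAux_nonneg x)) (deriv_mAux_nonpos hx)
  · -- the real-valued `liminf` is meaningful only because the flux is bounded above near infinity
    have hbdd : IsBoundedUnder (· ≤ ·) atTop (fun x => kompFlux (Sgam γ) x) := by
      refine isBoundedUnder_of_eventually_le (a := γ ^ 2 * mAux 1 ^ 2) ?_
      filter_upwards [eventually_ge_atTop (1 : ℝ)] with x hx
      have hx0 : 0 < x := by linarith
      rw [kompFlux_Sgam γ hx0]
      have hle : mAux x ≤ mAux 1 := antitoneOn_mAux (Set.mem_Ioi.mpr one_pos) hx0 hx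
      have h0 := mAux_nonneg x
      gcongr
    refine le_liminf_of_le hbdd.isCoboundedUnder_ge ?_
    filter_upwards [eventually_gt_atTop (0 : ℝ)] with x hx using hnonneg x hx
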